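/- Let S be a finite Boolean inverse monoid. Then there are finite groups G₁, …, G_r and natural numbers n₁, …, n_r such that S is isomorphic to the direct product M_{n₁}(G₁⁰) × ⋯ × M_{n_r}(G_r⁰) of Boolean inverse monoids of generalized rook matrices. -/

import Mathlib

namespace Paper

/-- An inverse semigroup with zero: an associative multiplication, a zero that is
absorbing, and a map `⁻¹` sending each element to its unique generalized inverse. -/
class IsInverseSemigroup (S : Type*) [Mul S] [Zero S] [Inv S] : Prop where
  mul_assoc : ∀ a b c : S, a * b * c = a * (b * c)
  mul_inv_mul : ∀ a : S, a * a⁻¹ * a = a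
  inv_mul_inv : ∀ a : S, a⁻¹ * a * a⁻¹ = a⁻¹
  inv_unique : ∀ a b : S, a * b * a = a → b * a * b = b → b = a⁻¹
  zero_mul : ∀ a : S, 0 * a = 0
  mul_zero : ∀ a : S, a * 0 = 0

variable {S : Type*} [Mul S] [Zero S] [Inv S]

/-- The natural partial order: `a ≤ b` iff `a = b * a⁻¹ * a`. -/
def nle (a b : S) : Prop := a = b * a⁻¹ * a

/-- `e` is an idempotent. -/
def idem (e : S) : Prop := e * e = e

/-- `a` and `b` are compatible. -/
def compat (a b : S) : Prop := idem (a⁻¹ * b) ∧ idem (a * b⁻¹)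

/-- `a` and `b` are orthogonal. -/
def orth (a b : S) : Prop := a⁻¹ * b = 0 ∧ a * b⁻¹ = 0

/-- `j` is the least upper bound of `a` and `b` for the natural partial order. -/
def isJoin (a b j : S) : Prop :=
  nle a j ∧ nle b j ∧ ∀ c : S, nle a c → nle b c → nle j c

/-- `m` is the greatest lower bound of `a` and `b` for the natural partial order. -/
def isMeet (a b m : S) : Prop :=
  nle m a ∧ nle m b ∧ ∀ c : S, nle c a → nle c b → nle c m

/-- `a` is an atom: a nonzero element with nothing strictly between it and `0`. -/
def isAtomElem (a : S) : Prop := a ≠ 0 ∧ ∀ x : S, nle x a → x = a ∨ x = 0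

/-- `s` is the least upper bound of the finite family `f`. -/
def isJoinFin {m : ℕ} (f : Fin m → S) (s : S) : Prop :=
  (∀ i, nle (f i) s) ∧ ∀ c : S, (∀ i, nle (f i) c) → nle s c

/-- A Boolean inverse semigroup: a nonzero inverse semigroup with zero in which
compatible pairs have joins, multiplication distributes over binary compatible joins,
and the idempotents form a generalized Boolean algebra under the natural partial
order (meets of idempotents are automatically given by multiplication; the extra
requirement is the existence of relative complements). -/
class IsBooleanInverseSemigroup (S : Type*) [Mul S] [Zero S] [Inv S]
    extends IsInverseSemigroup S : Prop where
  exists_ne_zero : ∃ a : S, a ≠ 0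
  compat_join : ∀ a b : S, compat a b → ∃ j, isJoin a b j
  mul_join : ∀ a b j c : S, isJoin a b j → isJoin (c * a) (c * b) (c * j)
  join_mul : ∀ a b j c : S, isJoin a b j → isJoin (a * c) (b * c) (j * c)
  relcomp : ∀ e f : S, idem e → idem f → nle f e →
    ∃ g : S, idem g ∧ nle g e ∧ g * f = 0 ∧ isJoin f g e


/-- An `X × X` generalized rook matrix over `G⁰` (`G` with a zero adjoined):
finitely many nonzero entries, and any two entries in the same row (resp. column)
lying in distinct columns (resp. rows) have orthogonal ranges (resp. domains). -/
def IsRook {X : Type*} {G : Type*} [Group G] (M : X → X → WithZero G) : Prop :=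
  Set.Finite {p : X × X | M p.1 p.2 ≠ 0} ∧
  (∀ i j k : X, j ≠ k → (M i j)⁻¹ * M i k = 0) ∧
  (∀ i j k : X, i ≠ j → M i k * (M j k)⁻¹ = 0)

open Classical in
/-- The product of rook matrices: `(A B)_{i j} = ⊕ₖ A_{i k} B_{k j}` (for rook
matrices, at most one summand is nonzero). -/
noncomputable def rookMul {X : Type*} {G : Type*} [Group G]
    (A B : X → X → WithZero G) : X → X → WithZero G := fun i j =>
  if h : ∃ k, A i k * B k j ≠ 0 then A i h.choose * B h.choose j else 0

/-!
Two idempotent atoms `e`, `f` are equivalent when `e = x x⁻¹` and `f = x⁻¹ x` for some `x`. Fix a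
base atom `b` in each class; then `b S b` is a group with zero. Fix also, for each atom `e` of the
class, an element `t` with `t t⁻¹ = e` and `t⁻¹ t = b`. Sending `a` to the entries `tⱼ⁻¹ a tₖ`, with
`j` and `k` in the same class, gives one rook matrix over `b S b` per class. The entries determine
`a` because every idempotent is a finite join of atoms. Conversely, the pieces `tⱼ x tₖ⁻¹` cut out
by the entries `x` of rook matrices are pairwise orthogonal, so they have a join, and multiplication
distributes over it.
-/

universe w

variable (S) in
/-- The idempotent atoms of `S`, i.e. the atoms of its generalized Boolean algebra of
idempotents. -/
def IdemAtom : Type _ := {e : S // idem e ∧ isAtomElem e}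

namespace IdemAtom

instance : CoeOut (IdemAtom S) S := ⟨Subtype.val⟩

theorem ext {e f : IdemAtom S} (h : (e : S) = f) : e = f := Subtype.ext h

theorem idem (e : IdemAtom S) : idem (e : S) := e.2.1

theorem ne_zero (e : IdemAtom S) : (e : S) ≠ 0 := e.2.2.1

instance [Finite {e : S // Paper.idem e}] : Finite (IdemAtom S) :=
  Finite.of_injective (fun e => (⟨e, e.idem⟩ : {e : S // Paper.idem e}))
    fun _ _ h => ext congr(($h).1)

end IdemAtom

section InverseSemigroup

open IsInverseSemigroup (mul_inv_mul inv_mul_inv)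

variable [IsInverseSemigroup S]

/-- An inverse semigroup with zero as a Mathlib semigroup with zero. -/
abbrev semigroupWithZeroOfInverse : SemigroupWithZero S where
  mul_assoc := IsInverseSemigroup.mul_assoc
  zero_mul := IsInverseSemigroup.zero_mul
  mul_zero := IsInverseSemigroup.mul_zero

/-- The inversion of an inverse semigroup as a Mathlib involutive inversion. -/
abbrev involutiveInvOfInverse : InvolutiveInv S where
  inv_inv a := (IsInverseSemigroup.inv_unique _ _ (inv_mul_inv a) (mul_inv_mul a)).symm

attribute [local instance] semigroupWithZeroOfInverse involutiveInvOfInverse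

theorem mul_inv_mul_self (a : S) : a * (a⁻¹ * a) = a := by rw [← mul_assoc, mul_inv_mul]

theorem inv_mul_mul_inv (a : S) : a⁻¹ * (a * a⁻¹) = a⁻¹ := by rw [← mul_assoc, inv_mul_inv]

theorem idem_zero : idem (0 : S) := zero_mul 0

theorem idem_mul_inv (a : S) : idem (a * a⁻¹) := by rw [idem, ← mul_assoc, mul_inv_mul]

theorem idem_inv_mul (a : S) : idem (a⁻¹ * a) := by rw [idem, ← mul_assoc, inv_mul_inv]

theorem idem.inv_eq {e : S} (he : idem e) : e⁻¹ = e :=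
  (IsInverseSemigroup.inv_unique e e (by rw [he, he]) (by rw [he, he])).symm

theorem zero_inv : (0 : S)⁻¹ = 0 := idem_zero.inv_eq

-- `f (e f)⁻¹ e` is an idempotent that is also an inverse of `e f`, so `e f` is its own inverse.
theorem idem.mul {e f : S} (he : idem e) (hf : idem f) : idem (e * f) := by
  have hee (x : S) : e * (e * x) = e * x := by rw [← mul_assoc, he]
  have hff (x : S) : f * (f * x) = f * x := by rw [← mul_assoc, hf]
  have hmul := mul_inv_mul (e * f)
  have hinv := inv_mul_inv (e * f)
  simp only [mul_assoc] at hmul hinv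
  have hsandwich : f * (e * f)⁻¹ * e = (e * f)⁻¹ := by
    apply IsInverseSemigroup.inv_unique
    · simp only [mul_assoc, hee, hff, hmul]
    · have := congr(f * $hinv * e)
      simpa only [mul_assoc, hee, hff] using this
  have hidem : idem (e * f)⁻¹ := by
    have := congr(f * $hinv * e)
    rw [idem, ← hsandwich]
    simpa only [mul_assoc] using this
  have hself := hidem.inv_eq
  rw [inv_inv] at hself
  rwa [hself]

theorem idem.commute {e f : S} (he : idem e) (hf : idem f) : Commute e f := by
  have hef : e * f * (e * f) = e * f := he.mul hf
  have hfe : f * e * (f * e) = f * e := hf.mul he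
  have hee (x : S) : e * (e * x) = e * x := by rw [← mul_assoc, he]
  have hff (x : S) : f * (f * x) = f * x := by rw [← mul_assoc, hf]
  have hinv : f * e = (e * f)⁻¹ := by
    apply IsInverseSemigroup.inv_unique
    · simpa only [mul_assoc, hee, hff] using hef
    · simpa only [mul_assoc, hee, hff] using hfe
  exact (hinv.trans (he.mul hf).inv_eq).symm

theorem inv_mul_rev (a b : S) : (a * b)⁻¹ = b⁻¹ * a⁻¹ := by
  have hcomm := ((idem_inv_mul a).commute (idem_mul_inv b)).eq
  refine (IsInverseSemigroup.inv_unique _ _ ?_ ?_).symm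
  · calc a * b * (b⁻¹ * a⁻¹) * (a * b)
        = a * (b * b⁻¹ * (a⁻¹ * a)) * b := by simp only [mul_assoc]
      _ = a * a⁻¹ * a * (b * b⁻¹ * b) := by rw [← hcomm]; simp only [mul_assoc]
      _ = a * b := by rw [mul_inv_mul, mul_inv_mul]
  · calc b⁻¹ * a⁻¹ * (a * b) * (b⁻¹ * a⁻¹)
        = b⁻¹ * (a⁻¹ * a * (b * b⁻¹)) * a⁻¹ := by simp only [mul_assoc]
      _ = b⁻¹ * b * b⁻¹ * (a⁻¹ * a * a⁻¹) := by rw [hcomm]; simp only [mul_assoc]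
      _ = b⁻¹ * a⁻¹ := by rw [inv_mul_inv, inv_mul_inv]

theorem nle_iff_exists_mul_idem {a b : S} : nle a b ↔ ∃ e, idem e ∧ a = b * e := by
  refine ⟨fun h => ⟨a⁻¹ * a, idem_inv_mul a, by rw [← mul_assoc]; exact h⟩, ?_⟩
  rintro ⟨e, he, rfl⟩
  have hcomm := (he.commute (idem_inv_mul b)).eq
  calc b * e = b * b⁻¹ * b * (e * e) := by rw [mul_inv_mul, he]
    _ = b * (b⁻¹ * b * e) * e := by simp only [mul_assoc]
    _ = b * (e * b⁻¹) * (b * e) := by rw [← hcomm]; simp only [mul_assoc]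
    _ = b * (b * e)⁻¹ * (b * e) := by rw [inv_mul_rev, he.inv_eq]

theorem nle_mul_idem (a : S) {e : S} (he : idem e) : nle (a * e) a :=
  nle_iff_exists_mul_idem.2 ⟨e, he, rfl⟩

theorem nle.eq_mul_inv_mul {a b : S} (h : nle a b) : a = a * a⁻¹ * b := by
  obtain ⟨e, he, rfl⟩ := nle_iff_exists_mul_idem.1 h
  calc b * e = b * (b⁻¹ * b * e) := by rw [← mul_assoc, mul_inv_mul_self]
    _ = b * (e * e * (b⁻¹ * b)) := by rw [((idem_inv_mul b).commute he).eq, he]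
    _ = b * e * (b * e)⁻¹ * b := by rw [inv_mul_rev, he.inv_eq]; simp only [mul_assoc]

theorem nle.mul_eq {e f : S} (hf : idem f) (h : nle f e) : e * f = f := by
  rw [nle, hf.inv_eq, mul_assoc, hf] at h
  exact h.symm

/-- The natural partial order of an inverse semigroup. -/
abbrev naturalOrder : PartialOrder S where
  le := nle
  le_refl a := (mul_inv_mul a).symm
  le_trans a b c hab hbc := by
    obtain ⟨e, he, rfl⟩ := nle_iff_exists_mul_idem.1 hab
    obtain ⟨f, hf, rfl⟩ := nle_iff_exists_mul_idem.1 hbc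
    exact nle_iff_exists_mul_idem.2 ⟨f * e, hf.mul he, mul_assoc c f e⟩
  le_antisymm a b hab hba := by
    obtain ⟨e, he, hae⟩ := nle_iff_exists_mul_idem.1 hab
    obtain ⟨f, hf, hbf⟩ := nle_iff_exists_mul_idem.1 hba
    calc a = a * e := by rw [hae, mul_assoc, he]
      _ = a * (f * e) := by rw [← mul_assoc, ← hbf, ← hae, hae, mul_assoc, he]
      _ = a * e * f := by rw [(hf.commute he).eq, mul_assoc]
      _ = b := by rw [hae, mul_assoc b, he, ← hae, ← hbf]

attribute [local instance] naturalOrder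

theorem zero_nle (a : S) : (0 : S) ≤ a := (mul_zero (a * 0⁻¹)).symm

theorem isJoin_iff_isLUB {a b j : S} : isJoin a b j ↔ IsLUB {a, b} j := by
  simp only [isJoin, IsLUB, IsLeast, upperBounds_insert, upperBounds_singleton, lowerBounds,
    Set.mem_inter_iff, Set.mem_Ici, Set.mem_ofPred_eq, and_assoc, and_imp]
  rfl

theorem eq_zero_of_isLUB {A : Set S} {a : S} (ha : IsLUB A a) (hA : ∀ x ∈ A, x = 0) : a = 0 :=
  le_antisymm (ha.2 fun x hx => (hA x hx).le) (zero_nle a)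

namespace IdemAtom

theorem mul_inv_eq {e : IdemAtom S} {x : S} (hex : e * x = x) (hx : x ≠ 0) : x * x⁻¹ = e := by
  have hle : nle (e * (x * x⁻¹)) (e : S) := nle_mul_idem _ (idem_mul_inv x)
  rw [← mul_assoc, hex] at hle
  refine (e.2.2.2 _ hle).resolve_right fun hzero => hx ?_
  rw [← mul_inv_mul x, hzero, zero_mul]

theorem inv_mul_eq {e : IdemAtom S} {x : S} (hxe : x * e = x) (hx : x ≠ 0) : x⁻¹ * x = e := by
  have hex : e * x⁻¹ = x⁻¹ := by rw [← e.idem.inv_eq, ← inv_mul_rev, hxe]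
  have hx' : x⁻¹ ≠ 0 := fun h => hx (by rw [← inv_inv x, h, zero_inv])
  simpa only [inv_inv] using mul_inv_eq hex hx'

theorem isAtomElem_of_mul_eq {e : IdemAtom S} {x : S} (hex : e * x = x) (hx : x ≠ 0) :
    isAtomElem x := by
  refine ⟨hx, fun y hyx => or_iff_not_imp_right.2 fun hy => ?_⟩
  obtain ⟨f, _, rfl⟩ := nle_iff_exists_mul_idem.1 hyx
  have hey : e * (x * f) = x * f := by rw [← mul_assoc, hex]
  rw [hyx.eq_mul_inv_mul, mul_inv_eq hey hy, hex]

theorem mul_idem_eq_of_ne_zero {e : IdemAtom S} {x f : S} (hex : e * x = x) (hf : Paper.idem f)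
    (hxf : x * f ≠ 0) : x * f = x :=
  have hx : x ≠ 0 := fun h => hxf (by rw [h, zero_mul])
  ((isAtomElem_of_mul_eq hex hx).2 _ (nle_mul_idem x hf)).resolve_right hxf

theorem mul_eq_zero_of_ne {e f : IdemAtom S} (hne : e ≠ f) : (e * f : S) = 0 := by
  by_contra h
  have hef := mul_idem_eq_of_ne_zero e.idem f.idem h
  rw [(e.idem.commute f.idem).eq] at h hef
  exact hne (ext (hef.symm.trans (mul_idem_eq_of_ne_zero f.idem e.idem h)))

/-- The local monoid `e S e` at an idempotent atom. -/
abbrev Corner (e : IdemAtom S) : Subsemigroup S := Subsemigroup.corner (e : S)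

theorem mem_corner_iff {e : IdemAtom S} {x : S} : x ∈ e.Corner ↔ e * x = x ∧ x * e = x :=
  Subsemigroup.mem_corner_iff e.idem

theorem inv_mem_corner {e : IdemAtom S} {x : S} (hx : x ∈ e.Corner) : x⁻¹ ∈ e.Corner := by
  obtain ⟨hex, hxe⟩ := mem_corner_iff.1 hx
  rw [mem_corner_iff, ← e.idem.inv_eq, ← inv_mul_rev, ← inv_mul_rev, hex, hxe]
  exact ⟨rfl, rfl⟩

instance (e : IdemAtom S) : GroupWithZero e.Corner where
  zero := ⟨0, mem_corner_iff.2 ⟨mul_zero _, zero_mul _⟩⟩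
  one := ⟨e, mem_corner_iff.2 ⟨e.idem, e.idem⟩⟩
  inv x := ⟨(x : S)⁻¹, inv_mem_corner x.2⟩
  one_mul x := Subtype.ext (mem_corner_iff.1 x.2).1
  mul_one x := Subtype.ext (mem_corner_iff.1 x.2).2
  zero_mul x := Subtype.ext (zero_mul (x : S))
  mul_zero x := Subtype.ext (mul_zero (x : S))
  exists_pair_ne := ⟨⟨0, mem_corner_iff.2 ⟨mul_zero _, zero_mul _⟩⟩,
    ⟨e, mem_corner_iff.2 ⟨e.idem, e.idem⟩⟩, fun h => e.ne_zero congr(($h).1).symm⟩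
  inv_zero := Subtype.ext zero_inv
  mul_inv_cancel x hx := Subtype.ext <|
    mul_inv_eq (mem_corner_iff.1 x.2).1 fun h => hx (Subtype.ext h)

theorem coe_inv_corner {e : IdemAtom S} (x : e.Corner) : ((x⁻¹ : e.Corner) : S) = (x : S)⁻¹ := rfl

theorem coe_zero_corner (e : IdemAtom S) : ((0 : e.Corner) : S) = 0 := rfl

/-- Two idempotent atoms are equivalent when some element of `S` has one of them as its range and
the other as its domain. -/
instance setoid : Setoid (IdemAtom S) where
  r e f := ∃ x : S, x * x⁻¹ = e ∧ x⁻¹ * x = f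
  iseqv :=
    { refl := fun e => ⟨e, by rw [e.idem.inv_eq, e.idem], by rw [e.idem.inv_eq, e.idem]⟩
      symm := fun ⟨x, hran, hdom⟩ => ⟨x⁻¹, by rw [inv_inv, hdom], by rw [inv_inv, hran]⟩
      trans := fun ⟨x, hxran, hxdom⟩ ⟨y, hyran, hydom⟩ => ⟨x * y,
        by rw [inv_mul_rev, mul_assoc, ← mul_assoc y, hyran, ← hxdom, inv_mul_inv, hxran],
        by rw [inv_mul_rev, mul_assoc, ← mul_assoc x⁻¹, hxdom, ← hyran, mul_inv_mul, hydom]⟩ }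

theorem equiv_of_mul_eq {e f : IdemAtom S} {x : S} (hex : e * x = x) (hxf : x * f = x)
    (hx : x ≠ 0) : e ≈ f :=
  ⟨x, mul_inv_eq hex hx, inv_mul_eq hxf hx⟩

end IdemAtom

end InverseSemigroup

section BooleanInverseSemigroup

open IsInverseSemigroup (mul_inv_mul)
open IsBooleanInverseSemigroup (compat_join mul_join join_mul relcomp)

attribute [local instance] semigroupWithZeroOfInverse involutiveInvOfInverse naturalOrder

variable [IsBooleanInverseSemigroup S]

-- An idempotent that is neither zero nor an atom is the join of a smaller nonzero idempotent and
-- its relative complement, so every idempotent is a finite join of atoms.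
theorem idem_induction [Finite {e : S // idem e}] {p : S → Prop} (zero : p 0)
    (atom : ∀ e : IdemAtom S, p e) (join : ∀ e f g : S, p e → p f → isJoin e f g → p g)
    {e : S} (he : idem e) : p e := by
  suffices ∀ e : {e : S // idem e}, p e from this ⟨e, he⟩
  intro e
  induction e using WellFoundedLT.induction with
  | ind e ih =>
    obtain ⟨e, he⟩ := e
    by_cases hzero : e = 0
    · exact hzero ▸ zero
    by_cases hatom : isAtomElem e
    · exact atom ⟨e, he, hatom⟩
    obtain ⟨x, hxe, hx, hx0⟩ : ∃ x, nle x e ∧ x ≠ e ∧ x ≠ 0 := by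
      simpa only [isAtomElem, ne_eq, hzero, not_false_eq_true, true_and, not_forall, not_or,
        exists_prop] using hatom
    have hxidem : idem x := by
      obtain ⟨f, hf, rfl⟩ := nle_iff_exists_mul_idem.1 hxe
      exact he.mul hf
    obtain ⟨y, hyidem, hye, hyx, hjoin⟩ := relcomp e x he hxidem hxe
    have hy : y ≠ e := by
      rintro rfl
      exact hx0 (by rw [← hxe.mul_eq hxidem, hyx])
    exact join x y e (ih ⟨x, hxidem⟩ (lt_of_le_of_ne hxe fun h => hx congr(($h).1)))
      (ih ⟨y, hyidem⟩ (lt_of_le_of_ne hye fun h => hy congr(($h).1))) hjoin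

theorem eq_of_forall_atom_mul_eq [Finite {e : S // idem e}] {a b : S}
    (h : ∀ e : IdemAtom S, e * a = e * b) : a = b := by
  have hidem {f : S} (hf : idem f) : f * a = f * b := by
    refine idem_induction (p := fun f => f * a = f * b) ?_ h ?_ hf
    · rw [zero_mul, zero_mul]
    · intro e f g he hf hj
      have hja := isJoin_iff_isLUB.1 (join_mul _ _ _ a hj)
      rw [he, hf] at hja
      exact hja.unique (isJoin_iff_isLUB.1 (join_mul _ _ _ b hj))
  have ha : a = a * a⁻¹ * b := by rw [← hidem (idem_mul_inv a), mul_inv_mul]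
  have hb : b = b * b⁻¹ * a := by rw [hidem (idem_mul_inv b), mul_inv_mul]
  calc a = b * b⁻¹ * (a * a⁻¹ * b) := by
        rw [← mul_assoc, ((idem_mul_inv b).commute (idem_mul_inv a)).eq, mul_assoc, mul_inv_mul,
          ← ha]
    _ = b := by rw [← ha, ← hb]

theorem eq_of_forall_mul_atom_eq [Finite {e : S // idem e}] {a b : S}
    (h : ∀ e : IdemAtom S, a * e = b * e) : a = b := by
  refine inv_injective (eq_of_forall_atom_mul_eq fun e => inv_injective ?_)
  rw [inv_mul_rev, inv_mul_rev, inv_inv, inv_inv, e.idem.inv_eq, h e]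

theorem isLUB_insert_of_isLUB {P : Type*} [PartialOrder P] {s : Set P} {a b c : P}
    (hb : IsLUB s b) (hc : IsLUB {a, b} c) : IsLUB (insert a s) c := by
  refine (isLUB_congr ?_).1 hc
  rw [upperBounds_insert, upperBounds_insert, upperBounds_singleton, hb.upperBounds_eq]

-- The empty join is `0`, and an element orthogonal to every member of the family is orthogonal
-- to its join by distributivity, so the next binary join exists.
theorem exists_isLUB_mul_mul_of_pairwise_orth {ι : Type*} {s : ι → S} (t : Finset ι)
    (ht : (t : Set ι).Pairwise fun i j => orth (s i) (s j)) :
    ∃ a, ∀ c d, IsLUB ((fun i => c * s i * d) '' t) (c * a * d) := by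
  classical
  induction t using Finset.induction_on with
  | empty =>
    refine ⟨0, fun c d => ?_⟩
    rw [Finset.coe_empty, Set.image_empty, mul_zero, zero_mul, isLUB_empty_iff]
    exact zero_nle
  | insert i t hi ih =>
    rw [Finset.coe_insert] at ht ⊢
    obtain ⟨a, ha⟩ := ih (ht.mono (Set.subset_insert i t))
    have horth {j : ι} (hj : j ∈ t) : (s i)⁻¹ * s j = 0 ∧ s j * (s i)⁻¹ = 0 := by
      have hne : i ≠ j := by rintro rfl; exact hi hj
      exact ⟨(ht (Set.mem_insert _ _) (Set.mem_insert_of_mem _ hj) hne).1,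
        (ht (Set.mem_insert_of_mem _ hj) (Set.mem_insert _ _) hne.symm).2⟩
    have hleft : (s i)⁻¹ * a = 0 := by
      have hlub := ha (s i)⁻¹ (a⁻¹ * a)
      rw [mul_assoc, mul_inv_mul_self] at hlub
      refine eq_zero_of_isLUB hlub (Set.forall_mem_image.2 fun j hj => ?_)
      rw [(horth hj).1, zero_mul]
    have hright : s i * a⁻¹ = 0 := by
      have hlub := ha (a * a⁻¹) (s i)⁻¹
      rw [mul_inv_mul] at hlub
      rw [← inv_inj, inv_mul_rev, inv_inv, zero_inv]
      refine eq_zero_of_isLUB hlub (Set.forall_mem_image.2 fun j hj => ?_)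
      rw [mul_assoc, (horth hj).2, mul_zero]
    obtain ⟨b, hb⟩ := compat_join (s i) a ⟨hleft ▸ idem_zero, hright ▸ idem_zero⟩
    refine ⟨b, fun c d => ?_⟩
    rw [Set.image_insert_eq]
    exact isLUB_insert_of_isLUB (ha c d)
      (isJoin_iff_isLUB.1 (join_mul _ _ _ d (mul_join _ _ _ c hb)))

end BooleanInverseSemigroup

section RookMatrix

variable {X G : Type*} [Group G]

theorem isRook_iff {M : X → X → WithZero G} :
    IsRook M ↔ {p : X × X | M p.1 p.2 ≠ 0}.Finite ∧
      (∀ i j k, M i j ≠ 0 → M i k ≠ 0 → j = k) ∧ ∀ i j k, M i k ≠ 0 → M j k ≠ 0 → i = j := by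
  simp only [IsRook, mul_eq_zero, inv_eq_zero]
  grind

theorem rookMul_eq_of_ne_zero {A B : X → X → WithZero G} (hA : IsRook A) {i l : X}
    (hl : A i l ≠ 0) (j : X) : rookMul A B i j = A i l * B l j := by
  unfold rookMul
  split_ifs with h
  · rw [(isRook_iff.1 hA).2.1 i _ l (left_ne_zero_of_mul h.choose_spec) hl]
  · exact (not_not.1 fun hne => h ⟨l, hne⟩).symm

theorem rookMul_eq_zero {A B : X → X → WithZero G} {i : X} (hi : ∀ l, A i l = 0) (j : X) :
    rookMul A B i j = 0 :=
  dif_neg fun ⟨l, hl⟩ => hl (by rw [hi, zero_mul])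

end RookMatrix

section AtomFrame

open IsInverseSemigroup (mul_inv_mul inv_mul_inv)

attribute [local instance] semigroupWithZeroOfInverse involutiveInvOfInverse naturalOrder

/-- Coordinates on the groupoid of atoms of `S`. The idempotent atoms are labelled by pairs
`⟨i, j⟩`, where `i` names an equivalence class; `base i` is a representative of that class,
`arrow ⟨i, j⟩` is an element with range `atom ⟨i, j⟩` and domain `base i`, and the local monoid at
`base i` is identified with the group `G i` with a zero adjoined. -/
structure AtomFrame (S : Type*) [Mul S] [Zero S] [Inv S] [IsInverseSemigroup S] {ι : Type*}
    (X : ι → Type*) (G : ι → Type*) [∀ i, Group (G i)] where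
  base : ι → IdemAtom S
  eq_of_base_equiv {i j : ι} : base i ≈ base j → i = j
  atom : (Σ i, X i) ≃ IdemAtom S
  arrow : (Σ i, X i) → S
  arrow_mul_inv (p : Σ i, X i) : arrow p * (arrow p)⁻¹ = atom p
  inv_mul_arrow (p : Σ i, X i) : (arrow p)⁻¹ * arrow p = base p.1
  coord (i : ι) : WithZero (G i) ≃* (base i).Corner

theorem exists_fin_sigma_equiv_fiber {α β : Type*} [Finite α] [Finite β] (f : α → β) :
    ∃ (r : ℕ) (n : Fin r → ℕ) (e : Fin r ≃ β) (σ : (Σ i, Fin (n i)) ≃ α),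
      ∀ p, f (σ p) = e p.1 := by
  let e := (Finite.equivFin β).symm
  let τ (i : Fin (Nat.card β)) := (Finite.equivFin {a // f a = e i}).symm
  refine ⟨_, _, e, (Equiv.sigmaCongr e τ).trans (Equiv.sigmaFiberEquiv f), fun p => ?_⟩
  exact (τ p.1 p.2).2

theorem exists_atomFrame (S : Type*) [Mul S] [Zero S] [Inv S] [IsInverseSemigroup S]
    [Finite (IdemAtom S)] [Small.{w} S] :
    ∃ (r : ℕ) (n : Fin r → ℕ) (G : Fin r → Type w) (_ : ∀ i, Group (G i)),
      Nonempty (AtomFrame S (fun i => Fin (n i)) G) := by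
  classical
  obtain ⟨r, n, e, σ, hσ⟩ := exists_fin_sigma_equiv_fiber (Quotient.mk (IdemAtom.setoid (S := S)))
  have hequiv (p : Σ i, Fin (n i)) : σ p ≈ (e p.1).out :=
    Quotient.exact ((hσ p).trans (e p.1).out_eq.symm)
  choose arrow hran hdom using hequiv
  have hsmall (i : Fin r) : Small.{w} ((e i).out.Corner)ˣ :=
    small_of_injective (Subtype.val_injective.comp Units.val_injective)
  exact ⟨r, n, fun i => Shrink.{w} ((e i).out.Corner)ˣ, fun _ => inferInstance,
    ⟨{ base := fun i => (e i).out
       eq_of_base_equiv := fun h => e.injective (Quotient.out_equiv_out.1 h)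
       atom := σ
       arrow := arrow
       arrow_mul_inv := hran
       inv_mul_arrow := hdom
       coord := fun _ => (MulEquiv.withZero Shrink.mulEquiv).trans WithZero.withZeroUnitsEquiv }⟩⟩

namespace AtomFrame

variable {ι : Type*} {X : ι → Type*} {G : ι → Type*} [∀ i, Group (G i)]

section InverseSemigroup

variable [IsInverseSemigroup S]

theorem exists_injective_mulHom (F : AtomFrame S X G) (i : ι) :
    ∃ f : G i →ₙ* S, Function.Injective f :=
  ⟨((MulMemClass.subtype (F.base i).Corner).comp (F.coord i : WithZero (G i) →ₙ* _)).comp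
      (WithZero.coeMonoidHom : G i →* WithZero (G i)),
    Subtype.val_injective.comp ((F.coord i).injective.comp WithZero.coe_injective)⟩

variable (F : AtomFrame S X G)

theorem arrow_mul_base (p : Σ i, X i) : F.arrow p * F.base p.1 = F.arrow p := by
  rw [← F.inv_mul_arrow, mul_inv_mul_self]

theorem base_mul_inv_arrow (p : Σ i, X i) : F.base p.1 * (F.arrow p)⁻¹ = (F.arrow p)⁻¹ := by
  rw [← F.inv_mul_arrow, inv_mul_inv]

theorem base_mul_inv_arrow_mul (p : Σ i, X i) (a : S) :
    F.base p.1 * ((F.arrow p)⁻¹ * a) = (F.arrow p)⁻¹ * a := by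
  rw [← mul_assoc, base_mul_inv_arrow]

theorem inv_arrow_mul_arrow_of_ne {p q : Σ i, X i} (hpq : p ≠ q) :
    (F.arrow p)⁻¹ * F.arrow q = 0 := by
  calc (F.arrow p)⁻¹ * F.arrow q
      = (F.arrow p)⁻¹ * (F.atom p * F.atom q : S) * F.arrow q := by
        rw [← arrow_mul_inv, ← arrow_mul_inv, ← mul_assoc, inv_mul_mul_inv, mul_assoc, mul_inv_mul]
    _ = 0 := by
        rw [IdemAtom.mul_eq_zero_of_ne (F.atom.injective.ne hpq), mul_zero, zero_mul]

theorem mul_arrow_eq_zero_iff {x : S} {p : Σ i, X i} : x * F.arrow p = 0 ↔ x * F.atom p = 0 := by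
  refine ⟨fun h => ?_, fun h => ?_⟩
  · rw [← arrow_mul_inv, ← mul_assoc, h, zero_mul]
  · rw [← mul_inv_mul (F.arrow p), arrow_mul_inv, ← mul_assoc, h, zero_mul]

theorem inv_arrow_mul_mul_arrow_of_fst_ne {p q : Σ i, X i} (hpq : p.1 ≠ q.1) (a : S) :
    (F.arrow p)⁻¹ * a * F.arrow q = 0 := by
  by_contra hne
  refine hpq (F.eq_of_base_equiv (IdemAtom.equiv_of_mul_eq ?_ ?_ hne))
  · rw [mul_assoc, base_mul_inv_arrow_mul]
  · rw [mul_assoc, arrow_mul_base]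

theorem inv_arrow_mul_mul_arrow_mem_corner (a : S) (i : ι) (j k : X i) :
    (F.arrow ⟨i, j⟩)⁻¹ * a * F.arrow ⟨i, k⟩ ∈ (F.base i).Corner :=
  IdemAtom.mem_corner_iff.2 ⟨by rw [mul_assoc, F.base_mul_inv_arrow_mul ⟨i, j⟩],
    by rw [mul_assoc, F.arrow_mul_base ⟨i, k⟩]⟩

/-- The `i`-th block of the matrix of `a`: its `(j, k)` entry is `tⱼ⁻¹ a tₖ`, where `tⱼ` is
`F.arrow ⟨i, j⟩`. -/
def matrix (a : S) (i : ι) (j k : X i) : WithZero (G i) :=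
  (F.coord i).symm ⟨_, F.inv_arrow_mul_mul_arrow_mem_corner a i j k⟩

theorem coord_matrix (a : S) (i : ι) (j k : X i) :
    (F.coord i (F.matrix a i j k) : S) = (F.arrow ⟨i, j⟩)⁻¹ * a * F.arrow ⟨i, k⟩ := by
  rw [matrix, MulEquiv.apply_symm_apply]

theorem coe_coord_zero (i : ι) : (F.coord i 0 : S) = 0 := by
  rw [map_zero, IdemAtom.coe_zero_corner]

theorem coe_coord_inv (i : ι) (x : WithZero (G i)) : (F.coord i x⁻¹ : S) = (F.coord i x : S)⁻¹ := by
  rw [map_inv₀, IdemAtom.coe_inv_corner]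

theorem coe_coord_mul (i : ι) (x y : WithZero (G i)) :
    (F.coord i (x * y) : S) = F.coord i x * F.coord i y := by
  rw [map_mul, MulMemClass.coe_mul]

theorem coe_coord_injective (i : ι) : Function.Injective fun x => (F.coord i x : S) :=
  Subtype.val_injective.comp (F.coord i).injective

theorem matrix_eq_zero_iff {a : S} {i : ι} {j k : X i} :
    F.matrix a i j k = 0 ↔ (F.arrow ⟨i, j⟩)⁻¹ * a * F.arrow ⟨i, k⟩ = 0 := by
  rw [← (F.coe_coord_injective i).eq_iff, coord_matrix, coe_coord_zero]

theorem matrix_inv (a : S) (i : ι) (j k : X i) :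
    F.matrix a⁻¹ i j k = (F.matrix a i k j)⁻¹ := by
  apply F.coe_coord_injective i
  simp only [coe_coord_inv, coord_matrix, inv_mul_rev, inv_inv, mul_assoc]

theorem inv_arrow_mul_mul_atom_of_matrix_ne_zero {a : S} {i : ι} {j k : X i}
    (h : F.matrix a i j k ≠ 0) :
    (F.arrow ⟨i, j⟩)⁻¹ * a * F.atom ⟨i, k⟩ = (F.arrow ⟨i, j⟩)⁻¹ * a := by
  rw [Ne, matrix_eq_zero_iff, mul_arrow_eq_zero_iff] at h
  exact IdemAtom.mul_idem_eq_of_ne_zero (F.base_mul_inv_arrow_mul ⟨i, j⟩ a) (F.atom _).idem h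

theorem eq_of_matrix_ne_zero_of_matrix_ne_zero {a : S} {i : ι} {j k l : X i}
    (hk : F.matrix a i j k ≠ 0) (hl : F.matrix a i j l ≠ 0) : k = l := by
  have hne : (F.arrow ⟨i, j⟩)⁻¹ * a ≠ 0 := fun h =>
    hk (F.matrix_eq_zero_iff.2 (by rw [h, zero_mul]))
  have hkl : F.atom ⟨i, k⟩ = F.atom ⟨i, l⟩ := IdemAtom.ext <|
    (IdemAtom.inv_mul_eq (F.inv_arrow_mul_mul_atom_of_matrix_ne_zero hk) hne).symm.trans
      (IdemAtom.inv_mul_eq (F.inv_arrow_mul_mul_atom_of_matrix_ne_zero hl) hne)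
  exact eq_of_heq (Sigma.mk.inj (F.atom.injective hkl)).2

theorem isRook_matrix [∀ i, Finite (X i)] (a : S) (i : ι) : IsRook (F.matrix a i) := by
  refine isRook_iff.2 ⟨Set.toFinite _, fun j k l => F.eq_of_matrix_ne_zero_of_matrix_ne_zero,
    fun j k l hj hk => ?_⟩
  have hj' := inv_ne_zero hj
  have hk' := inv_ne_zero hk
  rw [← matrix_inv] at hj' hk'
  exact F.eq_of_matrix_ne_zero_of_matrix_ne_zero hj' hk'

/-- The element of `S` with `x` as its `(j, k)` entry in block `i` and no other nonzero entry. -/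
def matrixUnit (i : ι) (j k : X i) (x : WithZero (G i)) : S :=
  F.arrow ⟨i, j⟩ * F.coord i x * (F.arrow ⟨i, k⟩)⁻¹

theorem matrixUnit_zero (i : ι) (j k : X i) : F.matrixUnit i j k 0 = 0 := by
  rw [matrixUnit, coe_coord_zero, mul_zero, zero_mul]

theorem matrixUnit_inv (i : ι) (j k : X i) (x : WithZero (G i)) :
    (F.matrixUnit i j k x)⁻¹ = F.matrixUnit i k j x⁻¹ := by
  simp only [matrixUnit, inv_mul_rev, inv_inv, coe_coord_inv, mul_assoc]

theorem base_mul_coord_mul_base (i : ι) (x : WithZero (G i)) :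
    F.base i * (F.coord i x : S) * F.base i = F.coord i x := by
  obtain ⟨hleft, hright⟩ := IdemAtom.mem_corner_iff.1 (F.coord i x).2
  rw [hleft, hright]

theorem matrixUnit_mul_matrixUnit (i : ι) (j k l : X i) (x y : WithZero (G i)) :
    F.matrixUnit i j k x * F.matrixUnit i k l y = F.matrixUnit i j l (x * y) := by
  have hy := (IdemAtom.mem_corner_iff.1 (F.coord i y).2).1
  calc F.matrixUnit i j k x * F.matrixUnit i k l y
      = F.arrow ⟨i, j⟩ * F.coord i x * (((F.arrow ⟨i, k⟩)⁻¹ * F.arrow ⟨i, k⟩) * F.coord i y) *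
          (F.arrow ⟨i, l⟩)⁻¹ := by simp only [matrixUnit, mul_assoc]
    _ = F.matrixUnit i j l (x * y) := by
        rw [inv_mul_arrow, hy, matrixUnit, coe_coord_mul, ← mul_assoc (F.arrow ⟨i, j⟩)]

theorem matrixUnit_mul_matrixUnit_of_ne {i i' : ι} {k : X i} {j' : X i'}
    (hne : (⟨i, k⟩ : Σ i, X i) ≠ ⟨i', j'⟩) (j : X i) (k' : X i') (x : WithZero (G i))
    (y : WithZero (G i')) : F.matrixUnit i j k x * F.matrixUnit i' j' k' y = 0 := by
  calc F.matrixUnit i j k x * F.matrixUnit i' j' k' y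
      = F.arrow ⟨i, j⟩ * F.coord i x * ((F.arrow ⟨i, k⟩)⁻¹ * F.arrow ⟨i', j'⟩) *
          (F.coord i' y * (F.arrow ⟨i', k'⟩)⁻¹) := by simp only [matrixUnit, mul_assoc]
    _ = 0 := by rw [F.inv_arrow_mul_arrow_of_ne hne, mul_zero, zero_mul]

theorem inv_arrow_mul_matrixUnit_mul_arrow (i : ι) (j k : X i) (x : WithZero (G i)) :
    (F.arrow ⟨i, j⟩)⁻¹ * F.matrixUnit i j k x * F.arrow ⟨i, k⟩ = F.coord i x := by
  calc (F.arrow ⟨i, j⟩)⁻¹ * F.matrixUnit i j k x * F.arrow ⟨i, k⟩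
      = ((F.arrow ⟨i, j⟩)⁻¹ * F.arrow ⟨i, j⟩) * F.coord i x *
          ((F.arrow ⟨i, k⟩)⁻¹ * F.arrow ⟨i, k⟩) := by simp only [matrixUnit, mul_assoc]
    _ = F.coord i x := by rw [inv_mul_arrow, inv_mul_arrow, base_mul_coord_mul_base]

theorem inv_arrow_mul_matrixUnit_mul_arrow_of_ne {i i' : ι} {j k : X i} {j' k' : X i'}
    (hne : (⟨i', (j', k')⟩ : Σ i, X i × X i) ≠ ⟨i, (j, k)⟩) (x : WithZero (G i')) :
    (F.arrow ⟨i, j⟩)⁻¹ * F.matrixUnit i' j' k' x * F.arrow ⟨i, k⟩ = 0 := by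
  have hassoc : (F.arrow ⟨i, j⟩)⁻¹ * F.matrixUnit i' j' k' x * F.arrow ⟨i, k⟩ =
      ((F.arrow ⟨i, j⟩)⁻¹ * F.arrow ⟨i', j'⟩) * F.coord i' x *
        ((F.arrow ⟨i', k'⟩)⁻¹ * F.arrow ⟨i, k⟩) := by simp only [matrixUnit, mul_assoc]
  rw [hassoc]
  by_cases hj : (⟨i, j⟩ : Σ i, X i) = ⟨i', j'⟩
  · have hk : (⟨i', k'⟩ : Σ i, X i) ≠ ⟨i, k⟩ := by
      rintro ⟨⟩
      obtain ⟨⟩ := hj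
      exact hne rfl
    rw [F.inv_arrow_mul_arrow_of_ne hk, mul_zero]
  · rw [F.inv_arrow_mul_arrow_of_ne hj, zero_mul, zero_mul]

theorem orth_matrixUnit {M : ∀ i, X i → X i → WithZero (G i)} (hM : ∀ i, IsRook (M i))
    {p q : Σ i, X i × X i} (hpq : p ≠ q) :
    orth (F.matrixUnit p.1 p.2.1 p.2.2 (M p.1 p.2.1 p.2.2))
      (F.matrixUnit q.1 q.2.1 q.2.2 (M q.1 q.2.1 q.2.2)) := by
  obtain ⟨i, j, k⟩ := p
  obtain ⟨i', j', k'⟩ := q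
  rw [orth, matrixUnit_inv, matrixUnit_inv]
  constructor
  · by_cases hj : (⟨i, j⟩ : Σ i, X i) = ⟨i', j'⟩
    · obtain ⟨⟩ := hj
      have hk : k ≠ k' := by rintro rfl; exact hpq rfl
      rw [matrixUnit_mul_matrixUnit, (hM i).2.1 j k k' hk, matrixUnit_zero]
    · exact F.matrixUnit_mul_matrixUnit_of_ne hj _ _ _ _
  · by_cases hk : (⟨i, k⟩ : Σ i, X i) = ⟨i', k'⟩
    · obtain ⟨⟩ := hk
      have hj : j ≠ j' := by rintro rfl; exact hpq rfl
      rw [matrixUnit_mul_matrixUnit, (hM i).2.2 j j' k hj, matrixUnit_zero]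
    · exact F.matrixUnit_mul_matrixUnit_of_ne hk _ _ _ _

end InverseSemigroup

section BooleanInverseSemigroup

variable [IsBooleanInverseSemigroup S] (F : AtomFrame S X G)

theorem eq_zero_of_forall_mul_arrow_eq_zero [Finite {e : S // idem e}] {x : S}
    (h : ∀ p, x * F.arrow p = 0) : x = 0 := by
  refine eq_of_forall_mul_atom_eq fun e => ?_
  obtain ⟨p, rfl⟩ := F.atom.surjective e
  rw [zero_mul, ← mul_arrow_eq_zero_iff, h p]

theorem matrix_mul [∀ i, Finite (X i)] [Finite {e : S // idem e}] (a b : S) (i : ι) :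
    F.matrix (a * b) i = rookMul (F.matrix a i) (F.matrix b i) := by
  funext j k
  apply F.coe_coord_injective i
  by_cases hrow : ∃ l, F.matrix a i j l ≠ 0
  · obtain ⟨l, hl⟩ := hrow
    dsimp only
    calc (F.coord i (F.matrix (a * b) i j k) : S)
        = (F.arrow ⟨i, j⟩)⁻¹ * a * (b * F.arrow ⟨i, k⟩) := by
          rw [coord_matrix]; simp only [mul_assoc]
      _ = (F.arrow ⟨i, j⟩)⁻¹ * a * (F.arrow ⟨i, l⟩ * (F.arrow ⟨i, l⟩)⁻¹) *
            (b * F.arrow ⟨i, k⟩) := by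
          rw [arrow_mul_inv, F.inv_arrow_mul_mul_atom_of_matrix_ne_zero hl]
      _ = F.coord i (F.matrix a i j l * F.matrix b i l k) := by
          rw [coe_coord_mul, coord_matrix, coord_matrix]; simp only [mul_assoc]
      _ = F.coord i (rookMul (F.matrix a i) (F.matrix b i) j k) := by
          rw [rookMul_eq_of_ne_zero (F.isRook_matrix a i) hl]
  · push Not at hrow
    have hzero : (F.arrow ⟨i, j⟩)⁻¹ * a = 0 := by
      refine F.eq_zero_of_forall_mul_arrow_eq_zero fun ⟨i', l⟩ => ?_
      by_cases hi : i = i'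
      · subst hi
        exact F.matrix_eq_zero_iff.1 (hrow l)
      · exact F.inv_arrow_mul_mul_arrow_of_fst_ne hi a
    rw [rookMul_eq_zero hrow, F.matrix_eq_zero_iff.2]
    rw [← mul_assoc, hzero, zero_mul, zero_mul]

theorem matrix_injective [Finite {e : S // idem e}] : Function.Injective F.matrix := by
  intro a b hab
  have hblock (p q : Σ i, X i) :
      (F.arrow p)⁻¹ * a * F.arrow q = (F.arrow p)⁻¹ * b * F.arrow q := by
    by_cases hpq : p.1 = q.1
    · obtain ⟨i, j⟩ := p
      obtain ⟨_, k⟩ := q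
      obtain rfl : i = _ := hpq
      rw [← coord_matrix, ← coord_matrix, hab]
    · rw [F.inv_arrow_mul_mul_arrow_of_fst_ne hpq, F.inv_arrow_mul_mul_arrow_of_fst_ne hpq]
  refine eq_of_forall_atom_mul_eq fun e => eq_of_forall_mul_atom_eq fun f => ?_
  obtain ⟨p, rfl⟩ := F.atom.surjective e
  obtain ⟨q, rfl⟩ := F.atom.surjective f
  have hfactor (c : S) : (F.atom p * c * F.atom q : S) =
      F.arrow p * ((F.arrow p)⁻¹ * c * F.arrow q) * (F.arrow q)⁻¹ := by
    simp only [← arrow_mul_inv, mul_assoc]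
  rw [hfactor, hfactor, hblock]

theorem exists_matrix_eq [Finite ι] [∀ i, Finite (X i)] {M : ∀ i, X i → X i → WithZero (G i)}
    (hM : ∀ i, IsRook (M i)) : ∃ a, F.matrix a = M := by
  have := Fintype.ofFinite (Σ i, X i × X i)
  obtain ⟨a, ha⟩ := exists_isLUB_mul_mul_of_pairwise_orth (Finset.univ : Finset (Σ i, X i × X i))
    fun _ _ _ _ => F.orth_matrixUnit hM
  refine ⟨a, funext fun i => funext fun j => funext fun k => F.coe_coord_injective i ?_⟩
  have hgreatest : IsGreatest
      ((fun p : Σ i, X i × X i => (F.arrow ⟨i, j⟩)⁻¹ *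
        F.matrixUnit p.1 p.2.1 p.2.2 (M p.1 p.2.1 p.2.2) * F.arrow ⟨i, k⟩) ''
          ↑(Finset.univ : Finset (Σ i, X i × X i)))
      (F.coord i (M i j k) : S) := by
    refine ⟨⟨⟨i, j, k⟩, Finset.mem_coe.2 (Finset.mem_univ _),
      F.inv_arrow_mul_matrixUnit_mul_arrow i j k _⟩, Set.forall_mem_image.2 fun p _ => ?_⟩
    by_cases hp : p = ⟨i, j, k⟩
    · rw [hp]
      exact (F.inv_arrow_mul_matrixUnit_mul_arrow i j k _).le
    · rw [F.inv_arrow_mul_matrixUnit_mul_arrow_of_ne hp]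
      exact zero_nle _
  dsimp only
  rw [coord_matrix]
  exact (ha _ _).unique hgreatest.isLUB

end BooleanInverseSemigroup

end AtomFrame

end AtomFrame

theorem finite_boolean_inverse_monoid_structure_general (S : Type*)
    [Mul S] [Zero S] [Inv S] [IsBooleanInverseSemigroup S] [Finite {e : S // idem e}]
    [Small.{w} S] :
    ∃ (r : ℕ) (G : Fin r → Type w) (_ : ∀ i, Group (G i))
      (_ : ∀ i, ∃ f : G i →ₙ* S, Function.Injective f) (n : Fin r → ℕ)
      (Φ : S → ∀ i : Fin r, {M : Fin (n i) → Fin (n i) → WithZero (G i) // IsRook M}),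
      Function.Bijective Φ ∧
      ∀ a b : S, ∀ i : Fin r, (Φ (a * b) i).val = rookMul (Φ a i).val (Φ b i).val := by
  obtain ⟨r, n, G, hG, ⟨F⟩⟩ := exists_atomFrame.{w} S
  refine ⟨r, G, hG, F.exists_injective_mulHom, n, fun a i => ⟨F.matrix a i, F.isRook_matrix a i⟩,
    ⟨fun a b hab => ?_, fun M => ?_⟩, F.matrix_mul⟩
  · exact F.matrix_injective (funext fun i => congr(($hab i).val))
  · obtain ⟨a, ha⟩ := F.exists_matrix_eq fun i => (M i).2
    exact ⟨a, funext fun i => Subtype.ext (congrFun ha i)⟩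

/-- Every finite Boolean inverse monoid is isomorphic to a finite direct product
`M_{n₁}(G₁⁰) × ⋯ × M_{n_r}(G_r⁰)` of Boolean inverse monoids of generalized rook
matrices over finite groups with zero adjoined. -/
theorem finite_boolean_inverse_monoid_structure (S : Type*)
    [Mul S] [Zero S] [Inv S] [One S] [IsBooleanInverseSemigroup S] [Finite S]
    (hone : ∀ a : S, 1 * a = a ∧ a * 1 = a) :
    ∃ (r : ℕ) (G : Fin r → Type) (_ : ∀ i, Group (G i)) (_ : ∀ i, Finite (G i))
      (n : Fin r → ℕ)
      (Φ : S → ∀ i : Fin r, {M : Fin (n i) → Fin (n i) → WithZero (G i) // IsRook M}),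
      Function.Bijective Φ ∧
      ∀ a b : S, ∀ i : Fin r, (Φ (a * b) i).val = rookMul (Φ a i).val (Φ b i).val := by
  obtain ⟨r, G, hG, hemb, n, Φ, hΦ⟩ := finite_boolean_inverse_monoid_structure_general.{0} S
  exact ⟨r, G, hG, fun i => let ⟨f, hf⟩ := hemb i; .of_injective f hf, n, Φ, hΦ⟩

end Paper
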